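/- Let H be a real Hilbert space, A : H → 2^H a monotone operator, and T : H → H a mapping satisfying x − Tx ∈ A(Tx) for every x ∈ H (so T is a resolvent of A). Then: (i) the set A⁻¹(0) = {u ∈ H : 0 ∈ A(u)} is nonempty if and only if the orbit {Tⁿx : n ∈ ℕ} is bounded for some x ∈ H; (ii) if A⁻¹(0) is nonempty, then for every x ∈ H the sequence {Tⁿx} converges weakly to an element u of A⁻¹(0), i.e., ⟪Tⁿx, y⟫ → ⟪u, y⟫ as n → ∞ for every y ∈ H. -/

import Mathlib

open Filter
open scoped RealInnerProductSpace

/-!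
Everything rests on one identity: if `s` converges weakly to `p`, then `‖s - q‖² - ‖s - p‖²`, being
affine in `s`, converges to `‖q - p‖²`.

The resolvent `T` is firmly nonexpansive and its fixed points are the zeros of `A`. If an orbit is
bounded, its Cesàro means have a weak cluster point `p`; averaging `‖Tⁿ⁺¹x - Tp‖ ≤ ‖Tⁿx - p‖` and
telescoping bounds `‖s - Tp‖² - ‖s - p‖²` at these means by a null sequence, so `Tp = p`.
Conversely, if `T` has a fixed point, firm nonexpansiveness makes `‖Tⁿx - Tⁿ⁺¹x‖²` telescope, so
every weak cluster point of the orbit is fixed. The distances from the orbit to two such cluster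
points `p` and `q` decrease, so `‖Tⁿx - q‖² - ‖Tⁿx - p‖²` has a limit; it equals both `‖q - p‖²`
and `-‖p - q‖²`, whence `p = q`.
-/

section WeakConvergence

open Topology

variable {ι H : Type*} [NormedAddCommGroup H] [InnerProductSpace ℝ H]
  {s : ι → H} {l : Filter ι} {p q : H}

/-- Weak convergence of a family of vectors along a filter, tested against inner products. On a
Hilbert space these are all the continuous linear functionals, by the Riesz representation. -/
def WeaklyTendsto (s : ι → H) (l : Filter ι) (p : H) : Prop :=
  ∀ y : H, Tendsto (fun i => ⟪s i, y⟫) l (𝓝 ⟪p, y⟫)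

theorem exists_weaklyTendsto_ultrafilter [CompleteSpace H]
    (hs : Bornology.IsBounded (Set.range s)) (U : Ultrafilter ι) : ∃ p, WeaklyTendsto s U p := by
  obtain ⟨R, hR⟩ := hs.exists_norm_le
  let g : ι → WeakDual ℝ H := fun i => StrongDual.toWeakDual (InnerProductSpace.toDual ℝ H (s i))
  have hg : ∀ i, g i ∈ WeakDual.toStrongDual ⁻¹' Metric.closedBall (0 : StrongDual ℝ H) R := by
    intro i
    change InnerProductSpace.toDual ℝ H (s i) ∈ Metric.closedBall (0 : StrongDual ℝ H) R
    simpa using hR (s i) ⟨i, rfl⟩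
  obtain ⟨φ, -, hφ⟩ := (WeakDual.isCompact_closedBall (𝕜 := ℝ) (0 : StrongDual ℝ H) R)
    |>.ultrafilter_le_nhds (U.map g) (tendsto_principal.mpr (Eventually.of_forall hg))
  refine ⟨(InnerProductSpace.toDual ℝ H).symm (WeakDual.toStrongDual φ), fun y => ?_⟩
  rw [InnerProductSpace.toDual_symm_apply]
  exact ((WeakDual.eval_continuous y).tendsto φ).comp hφ

theorem norm_sub_sq_sub_norm_sub_sq (x p q : H) :
    ‖x - q‖ ^ 2 - ‖x - p‖ ^ 2 = ⟪x, (2 : ℝ) • (p - q)⟫ + (‖q‖ ^ 2 - ‖p‖ ^ 2) := by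
  rw [norm_sub_sq_real, norm_sub_sq_real, inner_smul_right, inner_sub_right]
  ring

namespace WeaklyTendsto

theorem tendsto_norm_sub_sq_sub_norm_sub_sq (hs : WeaklyTendsto s l p) (q : H) :
    Tendsto (fun i => ‖s i - q‖ ^ 2 - ‖s i - p‖ ^ 2) l (𝓝 (‖p - q‖ ^ 2)) := by
  have hlim : ‖p - q‖ ^ 2 = ⟪p, (2 : ℝ) • (p - q)⟫ + (‖q‖ ^ 2 - ‖p‖ ^ 2) := by
    simpa using norm_sub_sq_sub_norm_sub_sq p p q
  simp only [norm_sub_sq_sub_norm_sub_sq _ p q, hlim]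
  exact (hs _).add_const _

theorem eq_of_norm_sub_sq_sub_norm_sub_sq_le [l.NeBot] (hs : WeaklyTendsto s l p) {ε : ι → ℝ}
    (hε : Tendsto ε l (𝓝 0)) (h : ∀ᶠ i in l, ‖s i - q‖ ^ 2 - ‖s i - p‖ ^ 2 ≤ ε i) : q = p := by
  have hle : ‖p - q‖ ^ 2 ≤ 0 :=
    le_of_tendsto_of_tendsto (hs.tendsto_norm_sub_sq_sub_norm_sub_sq q) hε h
  have hzero : ‖p - q‖ = 0 := sq_eq_zero_iff.mp (le_antisymm hle (sq_nonneg _))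
  exact (sub_eq_zero.mp (norm_eq_zero.mp hzero)).symm

theorem eq_of_tendsto_norm_sub {l₁ l₂ : Filter ι} [l₁.NeBot] [l₂.NeBot]
    (hp : WeaklyTendsto s l₁ p) (hq : WeaklyTendsto s l₂ q) (hl₁ : l₁ ≤ l) (hl₂ : l₂ ≤ l)
    {a b : ℝ} (ha : Tendsto (fun i => ‖s i - p‖) l (𝓝 a))
    (hb : Tendsto (fun i => ‖s i - q‖) l (𝓝 b)) : p = q := by
  have hdiff : Tendsto (fun i => ‖s i - q‖ ^ 2 - ‖s i - p‖ ^ 2) l (𝓝 (b ^ 2 - a ^ 2)) :=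
    (hb.pow 2).sub (ha.pow 2)
  have h₁ : ‖p - q‖ ^ 2 = b ^ 2 - a ^ 2 :=
    tendsto_nhds_unique (hp.tendsto_norm_sub_sq_sub_norm_sub_sq q) (hdiff.mono_left hl₁)
  have h₂ : ‖q - p‖ ^ 2 = -(b ^ 2 - a ^ 2) :=
    tendsto_nhds_unique (hq.tendsto_norm_sub_sq_sub_norm_sub_sq p)
      ((hdiff.mono_left hl₂).neg.congr fun _ => neg_sub _ _)
  rw [norm_sub_rev] at h₂
  have hzero : ‖p - q‖ = 0 := sq_eq_zero_iff.mp (by linarith)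
  exact sub_eq_zero.mp (norm_eq_zero.mp hzero)

end WeaklyTendsto

/-- **Opial's lemma**, along an arbitrary filter. -/
theorem exists_mem_weaklyTendsto_of_tendsto_norm_sub [CompleteSpace H] [l.NeBot] {S : Set H}
    (hs : Bornology.IsBounded (Set.range s))
    (hcluster : ∀ (U : Ultrafilter ι) (p : H), ↑U ≤ l → WeaklyTendsto s U p → p ∈ S)
    (hdist : ∀ p ∈ S, ∃ a, Tendsto (fun i => ‖s i - p‖) l (𝓝 a)) :
    ∃ p ∈ S, WeaklyTendsto s l p := by
  obtain ⟨p, hp⟩ := exists_weaklyTendsto_ultrafilter hs (Ultrafilter.of l)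
  have hpS : p ∈ S := hcluster _ p (Ultrafilter.of_le l) hp
  refine ⟨p, hpS, fun y => (tendsto_iff_ultrafilter _ _ _).mpr fun V hV => ?_⟩
  obtain ⟨q, hq⟩ := exists_weaklyTendsto_ultrafilter hs V
  obtain ⟨a, ha⟩ := hdist p hpS
  obtain ⟨b, hb⟩ := hdist q (hcluster V q hV hq)
  obtain rfl : p = q := hp.eq_of_tendsto_norm_sub hq (Ultrafilter.of_le l) hV ha hb
  exact hq y

end WeakConvergence

section BirkhoffAverage

variable {α E H : Type*} (𝕜 : Type*) [RCLike 𝕜] [NormedAddCommGroup E] [NormedSpace 𝕜 E]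
  [NormedAddCommGroup H] [InnerProductSpace ℝ H]

theorem norm_birkhoffAverage_le {f : α → α} {g : α → E} {x : α} {R : ℝ}
    (hR : ∀ n, ‖g (f^[n] x)‖ ≤ R) (n : ℕ) : ‖birkhoffAverage 𝕜 f g n x‖ ≤ R := by
  rcases n.eq_zero_or_pos with rfl | hn
  · simpa using (norm_nonneg _).trans (hR 0)
  have hsum : ‖birkhoffSum f g n x‖ ≤ n * R := by
    simpa [birkhoffSum] using norm_sum_le_of_le (Finset.range n) fun k _ => hR k
  rw [birkhoffAverage, norm_smul, norm_inv, RCLike.norm_natCast,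
    inv_mul_le_iff₀ (Nat.cast_pos.mpr hn)]
  exact hsum

theorem norm_birkhoffAverage_sub_sq_sub_norm_sub_sq (f : α → α) (g : α → H) {n : ℕ} (hn : n ≠ 0)
    (x : α) (p q : H) :
    ‖birkhoffAverage ℝ f g n x - q‖ ^ 2 - ‖birkhoffAverage ℝ f g n x - p‖ ^ 2 =
      birkhoffAverage ℝ f (fun y => ‖g y - q‖ ^ 2 - ‖g y - p‖ ^ 2) n x := by
  have hn' : (n : ℝ) ≠ 0 := Nat.cast_ne_zero.mpr hn
  simp only [norm_sub_sq_sub_norm_sub_sq, birkhoffAverage, birkhoffSum, Finset.sum_add_distrib,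
    ← sum_inner, real_inner_smul_left, smul_eq_mul, Finset.sum_const, Finset.card_range,
    nsmul_eq_mul]
  field_simp

end BirkhoffAverage

section Nonexpansive

open Function Topology

theorem antitone_dist_iterate_of_isFixedPt {X : Type*} [PseudoMetricSpace X] {T : X → X}
    (hT : LipschitzWith 1 T) {u : X} (hu : IsFixedPt T u) (x : X) :
    Antitone fun n => dist (T^[n] x) u := by
  refine antitone_nat_of_succ_le fun n => ?_
  calc dist (T^[n + 1] x) u = dist (T (T^[n] x)) (T u) := by rw [iterate_succ_apply', hu.eq]
    _ ≤ dist (T^[n] x) u := by simpa using hT.dist_le_mul (T^[n] x) u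

theorem isBounded_range_iterate_of_isFixedPt {X : Type*} [PseudoMetricSpace X] {T : X → X}
    (hT : LipschitzWith 1 T) {u : X} (hu : IsFixedPt T u) (x : X) :
    Bornology.IsBounded (Set.range fun n : ℕ => T^[n] x) := by
  refine Metric.isBounded_closedBall (x := u) (r := dist x u) |>.subset ?_
  rintro _ ⟨n, rfl⟩
  exact antitone_dist_iterate_of_isFixedPt hT hu x n.zero_le

theorem exists_tendsto_dist_iterate_of_isFixedPt {X : Type*} [PseudoMetricSpace X] {T : X → X}
    (hT : LipschitzWith 1 T) {u : X} (hu : IsFixedPt T u) (x : X) :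
    ∃ a, Tendsto (fun n => dist (T^[n] x) u) atTop (𝓝 a) :=
  ⟨_, tendsto_atTop_ciInf (antitone_dist_iterate_of_isFixedPt hT hu x)
    ⟨0, Set.forall_mem_range.mpr fun _ => dist_nonneg⟩⟩

variable {H : Type*} [NormedAddCommGroup H] [InnerProductSpace ℝ H] {T : H → H}

/-- Browder's **demiclosedness principle**. -/
theorem isFixedPt_of_weaklyTendsto_of_tendsto_sub {ι : Type*} {s : ι → H} {l : Filter ι} [l.NeBot]
    {p : H} (hT : LipschitzWith 1 T) (hs : Bornology.IsBounded (Set.range s))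
    (hp : WeaklyTendsto s l p) (hreg : Tendsto (fun i => s i - T (s i)) l (𝓝 0)) :
    IsFixedPt T p := by
  obtain ⟨R, hR⟩ := hs.exists_norm_le
  set e : ι → ℝ := fun i => ‖s i - T (s i)‖
  have he : Tendsto e l (𝓝 0) := by simpa using hreg.norm
  have hbound : Tendsto (fun i => e i * (e i + 2 * (R + ‖p‖))) l (𝓝 0) := by
    simpa using he.mul (he.add_const (2 * (R + ‖p‖)))
  refine hp.eq_of_norm_sub_sq_sub_norm_sub_sq_le hbound (Eventually.of_forall fun i => ?_)
  have hTp : ‖s i - T p‖ ≤ e i + ‖s i - p‖ :=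
    (norm_sub_le_norm_sub_add_norm_sub _ (T (s i)) _).trans
      (add_le_add_right (by simpa using hT.norm_sub_le (s i) p) _)
  have hsp : ‖s i - p‖ ≤ R + ‖p‖ :=
    (norm_sub_le _ _).trans (add_le_add_left (hR _ ⟨i, rfl⟩) _)
  calc ‖s i - T p‖ ^ 2 - ‖s i - p‖ ^ 2
      ≤ (e i + ‖s i - p‖) ^ 2 - ‖s i - p‖ ^ 2 := by gcongr
    _ = e i * (e i + 2 * ‖s i - p‖) := by ring
    _ ≤ e i * (e i + 2 * (R + ‖p‖)) := by gcongr

theorem norm_birkhoffAverage_sub_sq_sub_norm_sub_sq_le (hT : LipschitzWith 1 T) (x p : H) {n : ℕ}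
    (hn : n ≠ 0) :
    ‖birkhoffAverage ℝ T id n x - T p‖ ^ 2 - ‖birkhoffAverage ℝ T id n x - p‖ ^ 2 ≤
      ‖x - T p‖ ^ 2 / n := by
  have hstep (k : ℕ) : ‖T^[k] x - T p‖ ^ 2 - ‖T^[k] x - p‖ ^ 2 ≤
      ‖T^[k] x - T p‖ ^ 2 - ‖T^[k + 1] x - T p‖ ^ 2 := by
    have hle : ‖T^[k + 1] x - T p‖ ≤ ‖T^[k] x - p‖ := by
      simpa [iterate_succ_apply'] using hT.norm_sub_le (T^[k] x) p
    gcongr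
  rw [norm_birkhoffAverage_sub_sq_sub_norm_sub_sq T id hn, birkhoffAverage, smul_eq_mul,
    inv_mul_eq_div]
  gcongr
  calc ∑ k ∈ Finset.range n, (‖T^[k] x - T p‖ ^ 2 - ‖T^[k] x - p‖ ^ 2)
      ≤ ∑ k ∈ Finset.range n, (‖T^[k] x - T p‖ ^ 2 - ‖T^[k + 1] x - T p‖ ^ 2) :=
        Finset.sum_le_sum fun k _ => hstep k
    _ = ‖x - T p‖ ^ 2 - ‖T^[n] x - T p‖ ^ 2 :=
        Finset.sum_range_sub' (fun k => ‖T^[k] x - T p‖ ^ 2) n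
    _ ≤ ‖x - T p‖ ^ 2 := sub_le_self _ (sq_nonneg _)

theorem exists_isFixedPt_of_isBounded_range_iterate [CompleteSpace H] (hT : LipschitzWith 1 T)
    {x : H} (hx : Bornology.IsBounded (Set.range fun n : ℕ => T^[n] x)) : ∃ p, IsFixedPt T p := by
  obtain ⟨R, hR⟩ := hx.exists_norm_le
  have hmean : Bornology.IsBounded (Set.range fun n => birkhoffAverage ℝ T id n x) :=
    isBounded_iff_forall_norm_le.mpr ⟨R, Set.forall_mem_range.mpr
      (norm_birkhoffAverage_le ℝ fun n => hR _ ⟨n, rfl⟩)⟩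
  obtain ⟨p, hp⟩ := exists_weaklyTendsto_ultrafilter hmean (Ultrafilter.of atTop)
  have hlim : Tendsto (fun n : ℕ => ‖x - T p‖ ^ 2 / n) atTop (𝓝 0) :=
    tendsto_const_div_atTop_nhds_zero_nat _
  refine ⟨p, hp.eq_of_norm_sub_sq_sub_norm_sub_sq_le (hlim.mono_left (Ultrafilter.of_le _)) ?_⟩
  exact Ultrafilter.of_le atTop ((eventually_ne_atTop 0).mono fun n hn =>
    norm_birkhoffAverage_sub_sq_sub_norm_sub_sq_le hT x p hn)

theorem exists_isFixedPt_iff_exists_isBounded_range_iterate [CompleteSpace H]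
    (hT : LipschitzWith 1 T) :
    (∃ u, IsFixedPt T u) ↔ ∃ x, Bornology.IsBounded (Set.range fun n : ℕ => T^[n] x) :=
  ⟨fun ⟨u, hu⟩ => ⟨u, isBounded_range_iterate_of_isFixedPt hT hu u⟩,
    fun ⟨_, hx⟩ => exists_isFixedPt_of_isBounded_range_iterate hT hx⟩

end Nonexpansive

section FirmlyNonexpansive

open Function Topology

variable {H : Type*} [NormedAddCommGroup H] [InnerProductSpace ℝ H] {T : H → H}

/-- Firmly nonexpansive self-maps of an inner product space: the class to which resolvents of
monotone operators belong. -/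
def IsFirmlyNonexpansive (T : H → H) : Prop :=
  ∀ x y : H, ‖T x - T y‖ ^ 2 ≤ ⟪x - y, T x - T y⟫

namespace IsFirmlyNonexpansive

theorem norm_sub_sq_add_le (hT : IsFirmlyNonexpansive T) (x y : H) :
    ‖T x - T y‖ ^ 2 + ‖(x - y) - (T x - T y)‖ ^ 2 ≤ ‖x - y‖ ^ 2 := by
  rw [norm_sub_sq_real (x - y)]
  linarith [hT x y]

theorem lipschitzWith_one (hT : IsFirmlyNonexpansive T) : LipschitzWith 1 T := by
  refine LipschitzWith.mk_one fun x y => ?_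
  rw [dist_eq_norm, dist_eq_norm]
  refine le_of_sq_le_sq ?_ (norm_nonneg _)
  linarith [hT.norm_sub_sq_add_le x y, sq_nonneg ‖(x - y) - (T x - T y)‖]

theorem tendsto_iterate_sub_apply_iterate (hT : IsFirmlyNonexpansive T) {u : H}
    (hu : IsFixedPt T u) (x : H) :
    Tendsto (fun n => T^[n] x - T (T^[n] x)) atTop (𝓝 0) := by
  obtain ⟨a, ha⟩ := exists_tendsto_dist_iterate_of_isFixedPt hT.lipschitzWith_one hu x
  have hdecrease : Tendsto (fun n => dist (T^[n] x) u ^ 2 - dist (T^[n + 1] x) u ^ 2) atTop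
      (𝓝 0) := by
    simpa using (ha.pow 2).sub ((ha.comp (tendsto_add_atTop_nat 1)).pow 2)
  have hle (n : ℕ) : ‖T^[n] x - T (T^[n] x)‖ ^ 2 ≤
      dist (T^[n] x) u ^ 2 - dist (T^[n + 1] x) u ^ 2 := by
    have h := hT.norm_sub_sq_add_le (T^[n] x) u
    rw [hu.eq, sub_sub_sub_cancel_right] at h
    rw [dist_eq_norm, dist_eq_norm, iterate_succ_apply']
    linarith
  have hsq : Tendsto (fun n => ‖T^[n] x - T (T^[n] x)‖ ^ 2) atTop (𝓝 0) :=
    squeeze_zero (fun _ => sq_nonneg _) hle hdecrease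
  exact tendsto_zero_iff_norm_tendsto_zero.mpr (by simpa using hsq.sqrt)

theorem exists_isFixedPt_weaklyTendsto_iterate [CompleteSpace H] (hT : IsFirmlyNonexpansive T)
    (hfix : ∃ u, IsFixedPt T u) (x : H) :
    ∃ p, IsFixedPt T p ∧ WeaklyTendsto (fun n : ℕ => T^[n] x) atTop p := by
  obtain ⟨u, hu⟩ := hfix
  have hbdd := isBounded_range_iterate_of_isFixedPt hT.lipschitzWith_one hu x
  refine exists_mem_weaklyTendsto_of_tendsto_norm_sub (S := {p | IsFixedPt T p}) hbdd ?_ ?_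
  · intro U p hU hp
    exact isFixedPt_of_weaklyTendsto_of_tendsto_sub hT.lipschitzWith_one hbdd hp
      ((hT.tendsto_iterate_sub_apply_iterate hu x).mono_left hU)
  · intro p hp
    simpa only [dist_eq_norm] using
      exists_tendsto_dist_iterate_of_isFixedPt hT.lipschitzWith_one hp x

end IsFirmlyNonexpansive

end FirmlyNonexpansive

section MonotoneOperator

open Function

variable {H : Type*} [NormedAddCommGroup H] [InnerProductSpace ℝ H] {A : H → Set H} {T : H → H}

/-- Monotonicity of a set-valued operator on an inner product space. -/
def IsMonotoneOperator (A : H → Set H) : Prop :=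
  ∀ x y u v : H, u ∈ A x → v ∈ A y → 0 ≤ ⟪u - v, x - y⟫

/-- `T` is an everywhere defined selection of the resolvent `(I + A)⁻¹`. -/
def IsResolvent (T : H → H) (A : H → Set H) : Prop :=
  ∀ x : H, x - T x ∈ A (T x)

namespace IsResolvent

theorem isFirmlyNonexpansive (hT : IsResolvent T A) (hA : IsMonotoneOperator A) :
    IsFirmlyNonexpansive T := by
  intro x y
  have hmono : 0 ≤ ⟪(x - y) - (T x - T y), T x - T y⟫ := by
    simpa only [sub_sub_sub_comm] using hA _ _ _ _ (hT x) (hT y)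
  rwa [inner_sub_left, real_inner_self_eq_norm_sq, sub_nonneg] at hmono

theorem zero_mem_iff_isFixedPt (hT : IsResolvent T A) (hA : IsMonotoneOperator A) (u : H) :
    0 ∈ A u ↔ IsFixedPt T u := by
  refine ⟨fun hu => ?_, fun hu => ?_⟩
  · have hmono : 0 ≤ ⟪0 - (u - T u), u - T u⟫ := hA _ _ _ _ hu (hT u)
    rw [zero_sub, inner_neg_left, neg_nonneg] at hmono
    exact (sub_eq_zero.mp (real_inner_self_nonpos.mp hmono)).symm
  · simpa [hu.eq] using hT u

end IsResolvent

end MonotoneOperator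

/-- For a resolvent `T` of a monotone operator `A` on a real Hilbert space:
(i) `A⁻¹(0)` is nonempty iff some orbit `{Tⁿx}` is bounded;
(ii) if `A⁻¹(0)` is nonempty, each orbit `{Tⁿx}` converges weakly to a zero of `A`. -/
theorem stmt_18 {H : Type*} [NormedAddCommGroup H] [InnerProductSpace ℝ H]
    [CompleteSpace H] (A : H → Set H)
    (hA : ∀ x y u v : H, u ∈ A x → v ∈ A y → 0 ≤ ⟪u - v, x - y⟫)
    (T : H → H) (hT : ∀ x : H, x - T x ∈ A (T x)) :
    ((∃ u : H, (0 : H) ∈ A u) ↔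
        ∃ x : H, Bornology.IsBounded (Set.range fun n : ℕ => T^[n] x)) ∧
      ((∃ u : H, (0 : H) ∈ A u) → ∀ x : H, ∃ u : H, (0 : H) ∈ A u ∧
        ∀ y : H, Tendsto (fun n : ℕ => ⟪T^[n] x, y⟫) atTop (nhds ⟪u, y⟫)) := by
  have hres : IsResolvent T A := hT
  have hfirm : IsFirmlyNonexpansive T := hres.isFirmlyNonexpansive hA
  simp only [hres.zero_mem_iff_isFixedPt hA]
  exact ⟨exists_isFixedPt_iff_exists_isBounded_range_iterate hfirm.lipschitzWith_one,
    hfirm.exists_isFixedPt_weaklyTendsto_iterate⟩
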